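/- For a bivariate standard normal vector (X,Y) with correlation ρ ∈ [-1,1], E[|X||Y|] = (2/π)(√(1-ρ²) + ρ arcsin ρ). Consequently Cov(|X|,|Y|) = (2/π)(√(1-ρ²) + ρ arcsin ρ - 1). -/

import Mathlib

open Real MeasureTheory ProbabilityTheory

/-- A function homogeneous of degree `k` integrates against the standard Gaussian measure on the
plane as a radial moment times an angular integral. -/
lemma integral_gaussianReal_prod_of_homogeneous {f : ℝ × ℝ → ℝ} {g : ℝ → ℝ} {k : ℕ}
    (hf : ∀ r θ : ℝ, 0 < r → f (r * cos θ, r * sin θ) = r ^ k * g θ) :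
    ∫ p, f p ∂((gaussianReal 0 1).prod (gaussianReal 0 1)) =
      (2 * π)⁻¹ * (2 ^ ((k : ℝ) / 2) * Gamma ((k : ℝ) / 2 + 1)) * ∫ θ in -π..π, g θ := by
  have hradial : ∫ r in Set.Ioi (0 : ℝ), r ^ ((k : ℝ) + 1) * rexp (-(1 / 2) * r ^ (2 : ℝ)) =
      2 ^ ((k : ℝ) / 2) * Gamma ((k : ℝ) / 2 + 1) := by
    rw [integral_rpow_mul_exp_neg_mul_rpow two_pos (by linarith [k.cast_nonneg (α := ℝ)])
      one_half_pos, one_div, inv_rpow zero_le_two, ← rpow_neg zero_le_two]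
    rw [show -(-((k : ℝ) + 1 + 1) / 2) = (k : ℝ) / 2 + 1 by ring,
      show ((k : ℝ) + 1 + 1) / 2 = (k : ℝ) / 2 + 1 by ring, rpow_add_one two_ne_zero]
    ring
  rw [gaussianReal_of_var_ne_zero 0 one_ne_zero,
    prod_withDensity (measurable_gaussianPDF _ _) (measurable_gaussianPDF _ _),
    integral_withDensity_eq_integral_toReal_smul (by fun_prop)
      (ae_of_all _ fun _ ↦ ENNReal.mul_lt_top gaussianPDF_lt_top gaussianPDF_lt_top),
    ← Measure.volume_eq_prod, ← integral_comp_polarCoord_symm, polarCoord_target,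
    intervalIntegral.integral_of_le (by linarith [pi_pos]), integral_Ioc_eq_integral_Ioo,
    ← hradial, mul_assoc, ← setIntegral_prod_mul, ← integral_const_mul,
    ← Measure.volume_eq_prod]
  refine setIntegral_congr_fun (measurableSet_Ioi.prod measurableSet_Ioo) fun p hp ↦ ?_
  have hr : 0 < p.1 := hp.1
  have hexp : rexp (-(p.1 * cos p.2) ^ 2 / 2) * rexp (-(p.1 * sin p.2) ^ 2 / 2) =
      rexp (-(1 / 2) * p.1 ^ 2) := by
    rw [← exp_add]
    congr 1
    linear_combination (-(1 / 2) * p.1 ^ 2) * sin_sq_add_cos_sq p.2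
  have hpi : (√(2 * π))⁻¹ * (√(2 * π))⁻¹ = (2 * π)⁻¹ := by
    rw [← mul_inv, mul_self_sqrt (by positivity)]
  simp only [polarCoord_symm_apply, ENNReal.toReal_mul, toReal_gaussianPDF, gaussianPDFReal,
    hf _ _ hr, smul_eq_mul, NNReal.coe_one, mul_one, sub_zero, rpow_two,
    rpow_add_one hr.ne', rpow_natCast]
  rw [← hexp, ← hpi]
  ring

/-- Half the angular integral behind `E|X||Y|`. -/
lemma integral_cos_mul_abs_sin_add {α : ℝ} (hα : α ∈ Set.Icc (-(π / 2)) (π / 2)) :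
    ∫ θ in -(π / 2)..π / 2, |cos θ * sin (θ + α)| = cos α + α * sin α := by
  obtain ⟨h₁, h₂⟩ := hα
  have hii (a b : ℝ) : IntervalIntegrable (fun θ ↦ cos θ * sin (θ + α)) volume a b :=
    (by fun_prop : Continuous fun θ ↦ cos θ * sin (θ + α)).intervalIntegrable a b
  have hii_abs (a b : ℝ) : IntervalIntegrable (fun θ ↦ |cos θ * sin (θ + α)|) volume a b :=
    (hii a b).abs
  have hprim (a b : ℝ) : ∫ θ in a..b, cos θ * sin (θ + α) =
      (b * sin α / 2 - cos (2 * b + α) / 4) - (a * sin α / 2 - cos (2 * a + α) / 4) := by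
    refine intervalIntegral.integral_eq_sub_of_hasDerivAt
      (f := fun θ ↦ θ * sin α / 2 - cos (2 * θ + α) / 4) (fun θ _ ↦ ?_) (hii a b)
    have h := (((hasDerivAt_id θ).mul_const (sin α)).div_const 2).sub
      ((((hasDerivAt_id θ).const_mul 2).add_const α).cos.div_const 4)
    refine h.congr_deriv ?_
    have hsum : sin (2 * θ + α) = sin θ * cos (θ + α) + cos θ * sin (θ + α) := by
      rw [← sin_add]; ring_nf
    have hdiff : sin α = sin (θ + α) * cos θ - cos (θ + α) * sin θ := by
      rw [← sin_sub]; ring_nf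
    simp only [id]
    rw [hsum, hdiff]
    ring
  have hneg : ∫ θ in -(π / 2)..-α, |cos θ * sin (θ + α)| =
      -∫ θ in -(π / 2)..-α, cos θ * sin (θ + α) := by
    rw [← intervalIntegral.integral_neg]
    refine intervalIntegral.integral_congr fun θ hθ ↦ abs_of_nonpos ?_
    rw [Set.uIcc_of_le (by linarith)] at hθ
    exact mul_nonpos_of_nonneg_of_nonpos
      (cos_nonneg_of_neg_pi_div_two_le_of_le hθ.1 (by linarith [hθ.2]))
      (sin_nonpos_of_nonpos_of_neg_pi_le (by linarith [hθ.2]) (by linarith [hθ.1]))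
  have hpos : ∫ θ in -α..π / 2, |cos θ * sin (θ + α)| =
      ∫ θ in -α..π / 2, cos θ * sin (θ + α) := by
    refine intervalIntegral.integral_congr fun θ hθ ↦ abs_of_nonneg ?_
    rw [Set.uIcc_of_le (by linarith)] at hθ
    exact mul_nonneg (cos_nonneg_of_neg_pi_div_two_le_of_le (by linarith [hθ.1]) hθ.2)
      (sin_nonneg_of_nonneg_of_le_pi (by linarith [hθ.1]) (by linarith [hθ.2]))
  rw [← intervalIntegral.integral_add_adjacent_intervals (hii_abs _ (-α)) (hii_abs _ _), hneg, hpos,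
    hprim, hprim, show 2 * -α + α = -α by ring, show 2 * -(π / 2) + α = α - π by ring,
    show 2 * (π / 2) + α = α + π by ring, cos_neg, cos_sub_pi, cos_add_pi]
  ring

/-- For a `π`-periodic function, the integral over `[-π, π]` is twice that over any period. -/
lemma Function.Periodic.intervalIntegral_neg_pi_pi {g : ℝ → ℝ} (hg : Function.Periodic g π)
    (hc : Continuous g) (a : ℝ) : ∫ θ in -π..π, g θ = 2 * ∫ θ in a..a + π, g θ := by
  rw [← intervalIntegral.integral_add_adjacent_intervals (hc.intervalIntegrable (-π) 0)
    (hc.intervalIntegrable 0 π), two_mul]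
  congr 1
  · simpa using hg.intervalIntegral_add_eq (-π) a
  · simpa using hg.intervalIntegral_add_eq 0 a

lemma integral_abs_sin_add (α : ℝ) : ∫ θ in -π..π, |sin (θ + α)| = 4 := by
  have hper : Function.Periodic (fun θ ↦ |sin (θ + α)|) π := fun θ ↦ by
    simp [add_right_comm θ π α, sin_add_pi]
  have hsin : ∫ θ in (0 : ℝ)..π, |sin θ| = ∫ θ in (0 : ℝ)..π, sin θ := by
    refine intervalIntegral.integral_congr fun θ hθ ↦ abs_of_nonneg ?_
    rw [Set.uIcc_of_le pi_pos.le] at hθ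
    exact sin_nonneg_of_mem_Icc hθ
  rw [hper.intervalIntegral_neg_pi_pi (by fun_prop) (-α),
    intervalIntegral.integral_comp_add_right (fun θ ↦ |sin θ|) α, neg_add_cancel,
    show -α + π + α = π by ring, hsin, integral_sin]
  norm_num

lemma integral_abs_cos_mul_abs_sin_add {α : ℝ} (hα : α ∈ Set.Icc (-(π / 2)) (π / 2)) :
    ∫ θ in -π..π, |cos θ * sin (θ + α)| = 2 * (cos α + α * sin α) := by
  have hper : Function.Periodic (fun θ ↦ |cos θ * sin (θ + α)|) π := fun θ ↦ by
    simp [add_right_comm θ π α, sin_add_pi, cos_add_pi]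
  rw [hper.intervalIntegral_neg_pi_pi (by fun_prop) (-(π / 2)),
    show -(π / 2) + π = π / 2 by ring, integral_cos_mul_abs_sin_add hα]

lemma integral_abs_sin_mul_add_cos_mul (α : ℝ) :
    ∫ p : ℝ × ℝ, |sin α * p.1 + cos α * p.2| ∂((gaussianReal 0 1).prod (gaussianReal 0 1)) =
      √(2 / π) := by
  rw [integral_gaussianReal_prod_of_homogeneous (k := 1) (g := fun θ ↦ |sin (θ + α)|)
    fun r θ hr ↦ by
      rw [pow_one, ← abs_of_pos hr, ← abs_mul, abs_of_pos hr, sin_add]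
      ring_nf,
    integral_abs_sin_add, Nat.cast_one, Gamma_add_one (by norm_num), Gamma_one_half_eq,
    ← sqrt_eq_rpow, sqrt_div zero_le_two]
  have h := sq_sqrt pi_pos.le
  field_simp
  linear_combination 4 * h

lemma integral_abs_mul_abs_sin_mul_add_cos_mul {α : ℝ}
    (hα : α ∈ Set.Icc (-(π / 2)) (π / 2)) :
    ∫ p : ℝ × ℝ, |p.1| * |sin α * p.1 + cos α * p.2|
        ∂((gaussianReal 0 1).prod (gaussianReal 0 1)) =
      2 / π * (cos α + α * sin α) := by
  rw [integral_gaussianReal_prod_of_homogeneous (k := 2) (g := fun θ ↦ |cos θ * sin (θ + α)|)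
    fun r θ hr ↦ by
      rw [← abs_mul, ← abs_of_pos (pow_pos hr 2), ← abs_mul, sin_add]
      ring_nf,
    integral_abs_cos_mul_abs_sin_add hα]
  norm_num [Gamma_two]
  field_simp

/-- For a bivariate standard normal pair `(X,Y)` with correlation `ρ ∈ [-1,1]` (realized as
`X = Z₁`, `Y = ρZ₁ + √(1-ρ²)Z₂` with `Z₁, Z₂` i.i.d. standard normal),
`E[|X||Y|] = (2/π)(√(1-ρ²) + ρ arcsin ρ)` and hence
`Cov(|X|,|Y|) = (2/π)(√(1-ρ²) + ρ arcsin ρ - 1)`. -/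
theorem stmt13 (ρ : ℝ) (hρ : ρ ∈ Set.Icc (-1:ℝ) 1) :
    (∫ p : ℝ × ℝ, |p.1| * |ρ * p.1 + Real.sqrt (1 - ρ^2) * p.2|
        ∂((gaussianReal 0 1).prod (gaussianReal 0 1)))
      = 2/π * (Real.sqrt (1 - ρ^2) + ρ * Real.arcsin ρ) ∧
    (∫ p : ℝ × ℝ, |p.1| * |ρ * p.1 + Real.sqrt (1 - ρ^2) * p.2|
        ∂((gaussianReal 0 1).prod (gaussianReal 0 1)))
      - (∫ p : ℝ × ℝ, |p.1| ∂((gaussianReal 0 1).prod (gaussianReal 0 1))) *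
          (∫ p : ℝ × ℝ, |ρ * p.1 + Real.sqrt (1 - ρ^2) * p.2|
            ∂((gaussianReal 0 1).prod (gaussianReal 0 1)))
      = 2/π * (Real.sqrt (1 - ρ^2) + ρ * Real.arcsin ρ - 1) := by
  have hcos : √(1 - ρ ^ 2) = cos (arcsin ρ) := (cos_arcsin ρ).symm
  have hsin : sin (arcsin ρ) = ρ := sin_arcsin hρ.1 hρ.2
  have hprod := integral_abs_mul_abs_sin_mul_add_cos_mul (arcsin_mem_Icc ρ)
  have hfst := integral_abs_sin_mul_add_cos_mul (π / 2)
  have hsnd := integral_abs_sin_mul_add_cos_mul (arcsin ρ)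
  simp only [sin_pi_div_two, cos_pi_div_two, one_mul, zero_mul, add_zero] at hfst
  rw [hsin, ← hcos] at hprod
  rw [hsin, ← hcos] at hsnd
  rw [hprod, hfst, hsnd, mul_self_sqrt (by positivity)]
  constructor <;> ring
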